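/- Let d ≥ 2, μ > 0, and ψ ∈ C_c^∞(ℝ^{d−1}) with supp ψ ⊆ {η : 0 < c₀ ≤ |η| ≤ c₁}. Then there exists C > 0, depending only on d, μ, ψ, such that for every j ≥ 0, every f₀ ∈ 𝒮(ℝ^{d−1}), and every t ∈ (0, 1], the function f(t, x′) := (2π)^{1−d} ∫_{ℝ^{d−1}} e^{i x′·ξ′} e^{−i t μ^{1/2} |ξ′|^{1/2}} ψ(2^{−2j} ξ′) f̂₀(ξ′) dξ′ satisfies ‖f(t, ·)‖_{L^∞(ℝ^{d−1})} ≤ C t^{−(d−1)/2} 2^{3j(d−1)/2} ‖f₀‖_{L¹(ℝ^{d−1})}. -/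

import Mathlib

open Real MeasureTheory
open scoped RealInnerProductSpace

noncomputable section

/-- The Fourier transform `f̂(ξ) = ∫ e^{−ix·ξ} f(x) dx`. -/
def fhat {n : ℕ} (φ : EuclideanSpace ℝ (Fin n) → ℂ)
    (ξ : EuclideanSpace ℝ (Fin n)) : ℂ :=
  ∫ x : EuclideanSpace ℝ (Fin n), Complex.exp (-Complex.I * (⟪x, ξ⟫ : ℝ)) * φ x

/-!
For `F η = e^{i⟨y, η⟩} e^{-iλ√‖η‖} ψ(η)`, the square `|∫ F|²` of the kernel is the integral over `h`
of the autocorrelation `∫ F(η) conj F(η + h) dη`, in which the dependence on `y` reduces to a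
unimodular constant and the phase becomes `λ (√‖η + h‖ - √‖η‖)`. For `h = r w` with `‖w‖ = 1`
this is `λ r` times a smooth function of `(r, w, η)` which has no critical point in `η`, including
at `r = 0`, where this is the nondegeneracy of the Hessian of `√‖·‖`. Integration by parts then
gives decay of any order in `λ‖h‖`, uniformly in `h`, and integrating over `h` gives
`|∫ F|² ≲ λ^{-n}`. The general frequency scale follows by dilation, and the estimate for `L¹` data
by Fubini.
-/

section NonstationaryPhase

open scoped ContDiff

lemma hasCompactSupport_comp_prodMk {X Y Z : Type*} [TopologicalSpace X] [TopologicalSpace Y]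
    [R1Space Y] [Zero Z] {a : X × Y → Z} (ha : HasCompactSupport a) (x : X) :
    HasCompactSupport (fun y => a (x, y)) :=
  HasCompactSupport.intro (ha.image continuous_snd) fun y hy =>
    image_eq_zero_of_notMem_tsupport fun h => hy ⟨(x, y), h, rfl⟩

lemma exists_norm_oscillatoryIntegral_le {X Y : Type*} [TopologicalSpace X] [TopologicalSpace Y]
    [MeasurableSpace Y] (m : Measure Y) [IsFiniteMeasureOnCompacts m] (G : X × Y → ℝ)
    {a : X × Y → ℂ} (ha : Continuous a) (hac : HasCompactSupport a) :
    ∃ C, ∀ p, ∀ lam : ℝ,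
      ‖∫ x, Complex.exp (Complex.I * ((lam * G (p, x) : ℝ) : ℂ)) * a (p, x) ∂m‖ ≤ C := by
  obtain ⟨M, hM⟩ := hac.exists_bound_of_continuous ha
  have hK : IsCompact (Prod.snd '' tsupport a) := hac.image continuous_snd
  refine ⟨M * m.real (Prod.snd '' tsupport a), fun p lam => ?_⟩
  rw [← setIntegral_eq_integral_of_forall_compl_eq_zero (s := Prod.snd '' tsupport a)]
  · refine norm_setIntegral_le_of_norm_le_const hK.measure_lt_top fun x _ => ?_
    simpa only [norm_mul, Complex.norm_exp_I_mul_ofReal, one_mul] using hM (p, x)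
  · intro x hx
    rw [image_eq_zero_of_notMem_tsupport fun h => hx ⟨(p, x), h, rfl⟩, mul_zero]

variable {P E F : Type*} [NormedAddCommGroup P] [NormedSpace ℝ P] [NormedAddCommGroup E]
  [NormedSpace ℝ E] [NormedAddCommGroup F] [NormedSpace ℝ F]

lemma contDiff_mul_of_contDiffAt_tsupport {a g : E → ℂ} (ha : ContDiff ℝ ∞ a)
    (hg : ∀ x ∈ tsupport a, ContDiffAt ℝ ∞ g x) : ContDiff ℝ ∞ (fun x => g x * a x) :=
  (contMDiff_of_tsupport fun x hx =>
    ((hg x (tsupport_mul_subset_right hx)).mul ha.contDiffAt).contMDiffAt).contDiff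

lemma hasFDerivAt_comp_prodMk {f : P × E → F} {p : P} {x : E}
    (hf : DifferentiableAt ℝ f (p, x)) :
    HasFDerivAt (fun y => f (p, y)) ((fderiv ℝ f (p, x)).comp (.inr ℝ P E)) x :=
  hf.hasFDerivAt.comp x (hasFDerivAt_prodMk_right p x)

lemma fderiv_comp_prodMk_apply {f : P × E → F} {p : P} {x : E}
    (hf : DifferentiableAt ℝ f (p, x)) (e : E) :
    fderiv ℝ (fun y => f (p, y)) x e = fderiv ℝ f (p, x) (0, e) := by
  simp [(hasFDerivAt_comp_prodMk hf).fderiv]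

lemma contDiffAt_cexp_I_mul {G : E → ℝ} {x : E} {n : WithTop ℕ∞} (hG : ContDiffAt ℝ n G x)
    (lam : ℝ) : ContDiffAt ℝ n (fun y => Complex.exp (Complex.I * ((lam * G y : ℝ) : ℂ))) x :=
  (contDiffAt_const.mul (Complex.ofRealCLM.contDiff.contDiffAt.comp x
    (contDiffAt_const.mul hG))).cexp

lemma fderiv_cexp_I_mul_apply {G : E → ℝ} {x : E} (hG : DifferentiableAt ℝ G x) (lam : ℝ)
    (e : E) :
    fderiv ℝ (fun y => Complex.exp (Complex.I * ((lam * G y : ℝ) : ℂ))) x e =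
      Complex.I * lam * (fderiv ℝ G x e : ℝ) *
        Complex.exp (Complex.I * ((lam * G x : ℝ) : ℂ)) := by
  have hphase : HasFDerivAt (fun y => ((lam * G y : ℝ) : ℂ))
      (Complex.ofRealCLM.comp (lam • fderiv ℝ G x)) x :=
    Complex.ofRealCLM.hasFDerivAt.comp x (hG.hasFDerivAt.const_mul lam)
  rw [(hphase.const_mul Complex.I).cexp.fderiv]
  simp only [smul_apply, ContinuousLinearMap.comp_apply,
    Complex.ofRealCLM_apply, smul_eq_mul, Complex.ofReal_mul]
  ring

lemma contDiffAt_cexp_comp_prodMk {G : P × E → ℝ} {f : P × E → ℂ} {p : P}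
    (hG : ∀ z ∈ tsupport f, ContDiffAt ℝ ∞ G z) (lam : ℝ) :
    ∀ x ∈ tsupport (fun y => f (p, y)),
      ContDiffAt ℝ ∞ (fun y => Complex.exp (Complex.I * ((lam * G (p, y) : ℝ) : ℂ))) x :=
  fun x hx => contDiffAt_cexp_I_mul ((hG (p, x)
    (tsupport_comp_subset_preimage (f := Prod.mk p) f (by fun_prop) hx)).comp x
      (contDiff_prodMk_right p).contDiffAt) lam

lemma integrable_mul_of_contDiffAt_tsupport [MeasurableSpace E] [OpensMeasurableSpace E]
    (m : Measure E) [IsFiniteMeasureOnCompacts m] {f g : E → ℂ} (hf : ContDiff ℝ ∞ f)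
    (hfc : HasCompactSupport f) (hg : ∀ x ∈ tsupport f, ContDiffAt ℝ ∞ g x) :
    Integrable (fun x => g x * f x) m :=
  (contDiff_mul_of_contDiffAt_tsupport hf hg).continuous.integrable_of_hasCompactSupport
    hfc.mul_left

variable [FiniteDimensional ℝ E]

/-- The squared length of the gradient of `G` in the second variable, in the coordinates of
`Module.finBasis ℝ E`. -/
def gradSq (G : P × E → ℝ) (z : P × E) : ℝ :=
  ∑ i, fderiv ℝ G z (0, Module.finBasis ℝ E i) ^ 2

/-- The coefficients `∂ᵢG / |∇G|²` of the vector field `L` with `L e^{iλG} = iλ e^{iλG}`, where the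
derivatives are taken in the second variable. -/
def phaseField (G : P × E → ℝ) (i : Fin (Module.finrank ℝ E)) (z : P × E) : ℂ :=
  ((fderiv ℝ G z (0, Module.finBasis ℝ E i) / gradSq G z : ℝ) : ℂ)

/-- The formal transpose `a ↦ ∑ ∂ᵢ((∂ᵢG / |∇G|²) a)` of the vector field `phaseField G`, up to
sign. -/
def phaseTranspose (G : P × E → ℝ) (a : P × E → ℂ) (z : P × E) : ℂ :=
  ∑ i, fderiv ℝ (fun z => phaseField G i z * a z) z (0, Module.finBasis ℝ E i)

lemma gradSq_ne_zero {G : P × E → ℝ} {z : P × E} (hG : DifferentiableAt ℝ G z)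
    (hne : fderiv ℝ (fun y => G (z.1, y)) z.2 ≠ 0) : gradSq G z ≠ 0 := by
  contrapose! hne
  have hpartial : ∀ i, fderiv ℝ G z (0, Module.finBasis ℝ E i) = 0 := by
    simpa [gradSq, Finset.sum_eq_zero_iff_of_nonneg, sq_nonneg] using hne
  refine ContinuousLinearMap.coe_injective ((Module.finBasis ℝ E).ext fun i => ?_)
  simpa [hpartial] using fderiv_comp_prodMk_apply hG (Module.finBasis ℝ E i)

lemma contDiffAt_phaseField {G : P × E → ℝ} {z : P × E} (hG : ContDiffAt ℝ ∞ G z)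
    (hne : fderiv ℝ (fun y => G (z.1, y)) z.2 ≠ 0) (i : Fin (Module.finrank ℝ E)) :
    ContDiffAt ℝ ∞ (phaseField G i) z := by
  have hpartial (i) : ContDiffAt ℝ ∞ (fun z => fderiv ℝ G z (0, Module.finBasis ℝ E i)) z :=
    (hG.fderiv_right (m := ∞) (by simp)).clm_apply contDiffAt_const
  have hgradSq : ContDiffAt ℝ ∞ (gradSq G) z := ContDiffAt.sum fun i _ => (hpartial i).pow 2
  exact Complex.ofRealCLM.contDiff.contDiffAt.comp z
    ((hpartial i).div hgradSq (gradSq_ne_zero (hG.differentiableAt (by simp)) hne))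

variable {G : P × E → ℝ} {a : P × E → ℂ}

lemma contDiff_phaseField_mul (hG : ∀ z ∈ tsupport a, ContDiffAt ℝ ∞ G z)
    (hne : ∀ z ∈ tsupport a, fderiv ℝ (fun y => G (z.1, y)) z.2 ≠ 0) (ha : ContDiff ℝ ∞ a)
    (i : Fin (Module.finrank ℝ E)) : ContDiff ℝ ∞ (fun z => phaseField G i z * a z) :=
  contDiff_mul_of_contDiffAt_tsupport ha fun z hz => contDiffAt_phaseField (hG z hz) (hne z hz) i

lemma contDiff_phaseTranspose (hG : ∀ z ∈ tsupport a, ContDiffAt ℝ ∞ G z)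
    (hne : ∀ z ∈ tsupport a, fderiv ℝ (fun y => G (z.1, y)) z.2 ≠ 0) (ha : ContDiff ℝ ∞ a) :
    ContDiff ℝ ∞ (phaseTranspose G a) :=
  ContDiff.sum fun i _ => ((contDiff_phaseField_mul hG hne ha i).fderiv_right
    (m := ∞) (by simp)).clm_apply contDiff_const

lemma tsupport_phaseTranspose_subset : tsupport (phaseTranspose G a) ⊆ tsupport a := by
  refine closure_minimal (fun z hz => ?_) (isClosed_tsupport a)
  obtain ⟨i, -, hi⟩ := Finset.exists_ne_zero_of_sum_ne_zero hz
  exact tsupport_mul_subset_right (tsupport_fderiv_apply_subset ℝ _ (subset_tsupport _ hi))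

lemma sum_fderiv_cexp_mul_phaseField (hG : ∀ z ∈ tsupport a, ContDiffAt ℝ ∞ G z)
    (hne : ∀ z ∈ tsupport a, fderiv ℝ (fun y => G (z.1, y)) z.2 ≠ 0) (lam : ℝ) (z : P × E) :
    ∑ i, fderiv ℝ (fun y => Complex.exp (Complex.I * ((lam * G (z.1, y) : ℝ) : ℂ))) z.2
        (Module.finBasis ℝ E i) * (phaseField G i z * a z) =
      Complex.I * lam * (Complex.exp (Complex.I * ((lam * G z : ℝ) : ℂ)) * a z) := by
  by_cases hz : z ∈ tsupport a
  · have hGz : DifferentiableAt ℝ G z := (hG z hz).differentiableAt (by simp)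
    have hterm (i) : fderiv ℝ (fun y => Complex.exp (Complex.I * ((lam * G (z.1, y) : ℝ) : ℂ)))
          z.2 (Module.finBasis ℝ E i) * (phaseField G i z * a z) =
        Complex.I * lam * (Complex.exp (Complex.I * ((lam * G z : ℝ) : ℂ)) * a z) *
          ((fderiv ℝ G z (0, Module.finBasis ℝ E i) ^ 2 / gradSq G z : ℝ) : ℂ) := by
      rw [fderiv_cexp_I_mul_apply (hasFDerivAt_comp_prodMk hGz).differentiableAt,
        fderiv_comp_prodMk_apply hGz, phaseField]
      push_cast
      ring
    rw [Finset.sum_congr rfl fun i _ => hterm i, ← Finset.mul_sum, ← Complex.ofReal_sum,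
      ← Finset.sum_div, ← gradSq, div_self (gradSq_ne_zero hGz (hne z hz)), Complex.ofReal_one,
      mul_one]
  · simp [image_eq_zero_of_notMem_tsupport hz]

variable [MeasurableSpace E] [BorelSpace E] (m : Measure E) [m.IsAddHaarMeasure]

lemma integral_mul_fderiv_eq_neg_of_contDiffAt_tsupport {f g : E → ℂ} (hf : ContDiff ℝ ∞ f)
    (hfc : HasCompactSupport f) (hg : ∀ x ∈ tsupport f, ContDiffAt ℝ ∞ g x) (e : E) :
    ∫ x, g x * fderiv ℝ f x e ∂m = -∫ x, fderiv ℝ g x e * f x ∂m := by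
  refine integral_mul_fderiv_eq_neg_fderiv_mul_of_integrable ?_ ?_ ?_
    (fun x hx => (hg x hx).differentiableAt (by simp))
    (fun x _ => hf.differentiable (by simp) x)
  · exact integrable_mul_of_contDiffAt_tsupport m hf hfc fun x hx =>
      ((hg x hx).fderiv_right (m := ∞) (by simp)).clm_apply contDiffAt_const
  · exact integrable_mul_of_contDiffAt_tsupport m
      ((hf.fderiv_right (m := ∞) (by simp)).clm_apply contDiff_const) (hfc.fderiv_apply ℝ e)
      fun x hx => hg x (tsupport_fderiv_apply_subset ℝ e hx)
  · exact integrable_mul_of_contDiffAt_tsupport m hf hfc hg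

lemma integral_cexp_mul_phaseTranspose (hG : ∀ z ∈ tsupport a, ContDiffAt ℝ ∞ G z)
    (hne : ∀ z ∈ tsupport a, fderiv ℝ (fun y => G (z.1, y)) z.2 ≠ 0) (ha : ContDiff ℝ ∞ a)
    (hac : HasCompactSupport a) (p : P) (lam : ℝ) :
    ∫ x, Complex.exp (Complex.I * ((lam * G (p, x) : ℝ) : ℂ)) * phaseTranspose G a (p, x) ∂m =
      -(Complex.I * lam *
        ∫ x, Complex.exp (Complex.I * ((lam * G (p, x) : ℝ) : ℂ)) * a (p, x) ∂m) := by
  let osc : E → ℂ := fun x => Complex.exp (Complex.I * ((lam * G (p, x) : ℝ) : ℂ))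
  let B : Fin (Module.finrank ℝ E) → E → ℂ := fun i x => phaseField G i (p, x) * a (p, x)
  let e := Module.finBasis ℝ E
  have hB (i) : ContDiff ℝ ∞ (B i) :=
    (contDiff_phaseField_mul hG hne ha i).comp (contDiff_prodMk_right p)
  have hBc (i) : HasCompactSupport (B i) := (hasCompactSupport_comp_prodMk hac p).mul_left
  have hosc (i) : ∀ x ∈ tsupport (B i), ContDiffAt ℝ ∞ osc x := fun x hx =>
    contDiffAt_cexp_comp_prodMk hG lam x (tsupport_mul_subset_right hx)
  have htranspose (x) : phaseTranspose G a (p, x) = ∑ i, fderiv ℝ (B i) x (e i) :=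
    Finset.sum_congr rfl fun i _ => (fderiv_comp_prodMk_apply
      ((contDiff_phaseField_mul hG hne ha i).differentiable (by simp) _) _).symm
  calc ∫ x, osc x * phaseTranspose G a (p, x) ∂m
      = ∑ i, ∫ x, osc x * fderiv ℝ (B i) x (e i) ∂m := by
        simp only [htranspose, Finset.mul_sum]
        refine integral_finsetSum _ fun i _ => integrable_mul_of_contDiffAt_tsupport m
          (((hB i).fderiv_right (m := ∞) (by simp)).clm_apply contDiff_const)
          ((hBc i).fderiv_apply ℝ _) fun x hx => hosc i x (tsupport_fderiv_apply_subset ℝ _ hx)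
    _ = -∑ i, ∫ x, fderiv ℝ osc x (e i) * B i x ∂m := by
        simp only [integral_mul_fderiv_eq_neg_of_contDiffAt_tsupport m (hB _) (hBc _) (hosc _),
          Finset.sum_neg_distrib]
    _ = -∫ x, ∑ i, fderiv ℝ osc x (e i) * B i x ∂m := by
        rw [integral_finsetSum]
        exact fun i _ => integrable_mul_of_contDiffAt_tsupport m (hB i) (hBc i) fun x hx =>
          ((hosc i x hx).fderiv_right (m := ∞) (by simp)).clm_apply contDiffAt_const
    _ = -(Complex.I * lam * ∫ x, osc x * a (p, x) ∂m) := by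
        rw [← integral_const_mul]
        exact congrArg _ (integral_congr_ae (.of_forall fun x =>
          sum_fderiv_cexp_mul_phaseField hG hne lam (p, x)))

lemma exists_pow_mul_norm_oscillatoryIntegral_le (ha : ContDiff ℝ ∞ a)
    (hac : HasCompactSupport a) (hG : ∀ z ∈ tsupport a, ContDiffAt ℝ ∞ G z)
    (hne : ∀ z ∈ tsupport a, fderiv ℝ (fun y => G (z.1, y)) z.2 ≠ 0) (N : ℕ) :
    ∃ C, ∀ p lam, |lam| ^ N *
      ‖∫ x, Complex.exp (Complex.I * ((lam * G (p, x) : ℝ) : ℂ)) * a (p, x) ∂m‖ ≤ C := by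
  induction N generalizing a with
  | zero =>
    simpa only [pow_zero, one_mul] using exists_norm_oscillatoryIntegral_le m G ha.continuous hac
  | succ N ih =>
    have hsub := tsupport_phaseTranspose_subset (G := G) (a := a)
    obtain ⟨C, hC⟩ := ih (contDiff_phaseTranspose hG hne ha)
      (hac.of_isClosed_subset (isClosed_tsupport _) hsub)
      (fun z hz => hG z (hsub hz)) (fun z hz => hne z (hsub hz))
    refine ⟨C, fun p lam => le_of_eq_of_le ?_ (hC p lam)⟩
    rw [integral_cexp_mul_phaseTranspose m hG hne ha hac, norm_neg, norm_mul, norm_mul,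
      Complex.norm_I, one_mul, Complex.norm_real, Real.norm_eq_abs, pow_succ, mul_assoc]

theorem exists_one_add_pow_mul_norm_oscillatoryIntegral_le (ha : ContDiff ℝ ∞ a)
    (hac : HasCompactSupport a) (hG : ∀ z ∈ tsupport a, ContDiffAt ℝ ∞ G z)
    (hne : ∀ z ∈ tsupport a, fderiv ℝ (fun y => G (z.1, y)) z.2 ≠ 0) (N : ℕ) :
    ∃ C, ∀ p lam, (1 + |lam|) ^ N *
      ‖∫ x, Complex.exp (Complex.I * ((lam * G (p, x) : ℝ) : ℂ)) * a (p, x) ∂m‖ ≤ C := by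
  obtain ⟨A, hA⟩ := exists_norm_oscillatoryIntegral_le m G ha.continuous hac
  obtain ⟨B, hB⟩ := exists_pow_mul_norm_oscillatoryIntegral_le m ha hac hG hne N
  refine ⟨2 ^ (N - 1) * (A + B), fun p lam => ?_⟩
  set I := ‖∫ x, Complex.exp (Complex.I * ((lam * G (p, x) : ℝ) : ℂ)) * a (p, x) ∂m‖
  calc (1 + |lam|) ^ N * I ≤ 2 ^ (N - 1) * (1 ^ N + |lam| ^ N) * I := by
        gcongr
        exact add_pow_le zero_le_one (abs_nonneg lam) N
    _ = 2 ^ (N - 1) * (I + |lam| ^ N * I) := by ring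
    _ ≤ 2 ^ (N - 1) * (A + B) := by
        gcongr
        exacts [hA p lam, hB p lam]

end NonstationaryPhase

section Phase

open scoped ContDiff

variable {E : Type*} [NormedAddCommGroup E] [InnerProductSpace ℝ E]

/-- The factor `(√‖η + r w‖ + √‖η‖) (‖η + r w‖ + ‖η‖)` by which the increment of `√‖·‖` from `η` to
`η + r w` is multiplied to give the increment of `‖·‖²`. -/
def incrementFactor (r : ℝ) (w η : E) : ℝ :=
  (√‖η + r • w‖ + √‖η‖) * (‖η + r • w‖ + ‖η‖)

/-- The difference quotient `(√‖η + r w‖ - √‖η‖) / r`, rationalized so that it extends smoothly to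
`r = 0`. -/
def sqrtNormQuotient (r : ℝ) (w η : E) : ℝ :=
  ⟪η + r • w + η, w⟫ / incrementFactor r w η

variable {r : ℝ} {w η : E}

lemma incrementFactor_pos (hη : η ≠ 0) : 0 < incrementFactor r w η := by
  have : 0 < ‖η‖ := norm_pos_iff.2 hη
  unfold incrementFactor
  positivity

lemma sqrtNormQuotient_mul_incrementFactor (hη : η ≠ 0) :
    sqrtNormQuotient r w η * incrementFactor r w η = ⟪η + r • w + η, w⟫ :=
  div_mul_cancel₀ _ (incrementFactor_pos hη).ne'

lemma mul_sqrtNormQuotient (hη : η ≠ 0) :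
    r * sqrtNormQuotient r w η = √‖η + r • w‖ - √‖η‖ := by
  rw [sqrtNormQuotient, ← mul_div_assoc, div_eq_iff (incrementFactor_pos hη).ne',
    incrementFactor]
  obtain ⟨ζ, hζ⟩ : ∃ ζ, ζ = η + r • w := ⟨_, rfl⟩
  rw [← hζ]
  calc r * ⟪ζ + η, w⟫ = ⟪ζ + η, ζ - η⟫ := by
        rw [← real_inner_smul_right, hζ, add_sub_cancel_left]
    _ = ‖ζ‖ ^ 2 - ‖η‖ ^ 2 := by
        rw [inner_sub_right, inner_add_left, inner_add_left, real_inner_self_eq_norm_sq,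
          real_inner_self_eq_norm_sq, real_inner_comm]
        ring
    _ = (√‖ζ‖ ^ 2 - √‖η‖ ^ 2) * (‖ζ‖ + ‖η‖) := by
        rw [Real.sq_sqrt (norm_nonneg ζ), Real.sq_sqrt (norm_nonneg η)]
        ring
    _ = (√‖ζ‖ - √‖η‖) * ((√‖ζ‖ + √‖η‖) * (‖ζ‖ + ‖η‖)) := by ring

lemma contDiffAt_sqrtNormQuotient {z : (ℝ × E) × E} (hη : z.2 ≠ 0)
    (hζ : z.2 + z.1.1 • z.1.2 ≠ 0) :
    ContDiffAt ℝ ∞ (fun z : (ℝ × E) × E => sqrtNormQuotient z.1.1 z.1.2 z.2) z := by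
  have hshift : ContDiff ℝ ∞ (fun z : (ℝ × E) × E => z.2 + z.1.1 • z.1.2) := by fun_prop
  have hnormη : ContDiffAt ℝ ∞ (fun z : (ℝ × E) × E => ‖z.2‖) z := contDiffAt_snd.norm ℝ hη
  have hnormζ : ContDiffAt ℝ ∞ (fun z : (ℝ × E) × E => ‖z.2 + z.1.1 • z.1.2‖) z :=
    hshift.contDiffAt.norm ℝ hζ
  refine ContDiffAt.div (ContDiffAt.inner ℝ (by fun_prop) (by fun_prop)) ?_
    (incrementFactor_pos hη).ne'
  exact ((hnormζ.sqrt (norm_ne_zero_iff.2 hζ)).add (hnormη.sqrt (norm_ne_zero_iff.2 hη))).mul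
    (hnormζ.add hnormη)

lemma differentiableAt_sqrtNormQuotient (hη : η ≠ 0) (hζ : η + r • w ≠ 0) :
    DifferentiableAt ℝ (sqrtNormQuotient r w) η :=
  ((contDiffAt_sqrtNormQuotient (z := ((r, w), η)) hη hζ).comp η
    (contDiffAt_const.prodMk contDiffAt_id)).differentiableAt (by simp)

lemma hasFDerivAt_norm_of_ne_zero (hη : η ≠ 0) :
    HasFDerivAt (fun v : E => ‖v‖) (‖η‖⁻¹ • innerSL ℝ η) η := by
  have h := (hasStrictFDerivAt_norm_sq η).hasFDerivAt.sqrt (by simpa using hη)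
  simp only [Real.sqrt_sq (norm_nonneg _)] at h
  refine h.congr_fderiv ?_
  rw [← ofNat_smul_eq_nsmul ℝ, smul_smul]
  congr 1
  field_simp

lemma hasFDerivAt_sqrt_norm (hη : η ≠ 0) :
    HasFDerivAt (fun v : E => √‖v‖) ((2 * √‖η‖ ^ 3)⁻¹ • innerSL ℝ η) η := by
  refine ((hasFDerivAt_norm_of_ne_zero hη).sqrt (norm_ne_zero_iff.2 hη)).congr_fderiv ?_
  rw [smul_smul, pow_succ' √‖η‖, Real.sq_sqrt (norm_nonneg η)]
  congr 1
  field_simp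

lemma eq_of_inv_sqrt_norm_pow_smul_eq {ζ : E} (hη : η ≠ 0)
    (h : (2 * √‖ζ‖ ^ 3)⁻¹ • ζ = (2 * √‖η‖ ^ 3)⁻¹ • η) : ζ = η := by
  have hnorm (v : E) : ‖(2 * √‖v‖ ^ 3)⁻¹ • v‖ = (2 * √‖v‖)⁻¹ := by
    rw [norm_smul, Real.norm_of_nonneg (by positivity)]
    nth_rw 2 [← Real.sq_sqrt (norm_nonneg v)]
    field_simp
  have hsqrt : √‖ζ‖ = √‖η‖ := by
    have hnorms := congrArg norm h
    rw [hnorm, hnorm, inv_inj] at hnorms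
    exact mul_left_cancel₀ two_ne_zero hnorms
  have hpos : 0 < √‖η‖ := Real.sqrt_pos.2 (norm_pos_iff.2 hη)
  rw [hsqrt] at h
  exact smul_right_injective E (inv_ne_zero (by positivity)) h

lemma fderiv_sqrtNormQuotient_ne_zero_of_ne_zero (hr : r ≠ 0) (hw : w ≠ 0) (hη : η ≠ 0)
    (hζ : η + r • w ≠ 0) : fderiv ℝ (sqrtNormQuotient r w) η ≠ 0 := by
  intro hcrit
  have hdiff : HasFDerivAt (fun v : E => √‖v + r • w‖ - √‖v‖)
      ((2 * √‖η + r • w‖ ^ 3)⁻¹ • innerSL ℝ (η + r • w) - (2 * √‖η‖ ^ 3)⁻¹ • innerSL ℝ η) η :=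
    ((hasFDerivAt_comp_add_right (r • w)).2 (hasFDerivAt_sqrt_norm hζ)).sub
      (hasFDerivAt_sqrt_norm hη)
  have hquot : HasFDerivAt (fun v : E => √‖v + r • w‖ - √‖v‖) (0 : E →L[ℝ] ℝ) η := by
    have h := (differentiableAt_sqrtNormQuotient hη hζ).hasFDerivAt.const_mul r
    rw [hcrit, smul_zero] at h
    exact h.congr_of_eventuallyEq ((eventually_ne_nhds hη).mono fun v hv =>
      (mul_sqrtNormQuotient hv).symm)
  have hgrad : (2 * √‖η + r • w‖ ^ 3)⁻¹ • (η + r • w) = (2 * √‖η‖ ^ 3)⁻¹ • η := by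
    have h := sub_eq_zero.1 (hdiff.unique hquot)
    rw [← map_smul, ← map_smul] at h
    exact innerSL_inj.1 h
  exact smul_ne_zero hr hw (add_eq_left.1 (eq_of_inv_sqrt_norm_pow_smul_eq hη hgrad))

lemma sqrtNormQuotient_zero_mul (hη : η ≠ 0) :
    sqrtNormQuotient 0 w η * (2 * √‖η‖ ^ 3) = ⟪η, w⟫ := by
  have hsq := Real.sq_sqrt (norm_nonneg η)
  have h := sqrtNormQuotient_mul_incrementFactor (r := 0) (w := w) hη
  rw [incrementFactor, zero_smul, add_zero, inner_add_left] at h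
  linear_combination h / 2 + 2 * sqrtNormQuotient 0 w η * √‖η‖ * hsq

lemma hasFDerivAt_two_mul_sqrt_norm_pow (hη : η ≠ 0) :
    HasFDerivAt (fun v : E => 2 * √‖v‖ ^ 3) ((3 / √‖η‖) • innerSL ℝ η) η := by
  refine (((hasFDerivAt_sqrt_norm hη).pow 3).const_mul 2).congr_fderiv ?_
  rw [smul_smul, smul_smul]
  congr 1
  field_simp
  ring

lemma fderiv_sqrtNormQuotient_zero_ne_zero (hw : w ≠ 0) (hη : η ≠ 0) :
    fderiv ℝ (sqrtNormQuotient 0 w) η ≠ 0 := by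
  intro hcrit
  have hdiff : DifferentiableAt ℝ (sqrtNormQuotient 0 w) η :=
    differentiableAt_sqrtNormQuotient hη (by rwa [zero_smul, add_zero])
  have hprod := (hcrit ▸ hdiff.hasFDerivAt).mul (hasFDerivAt_two_mul_sqrt_norm_pow hη)
  have hinner : HasFDerivAt (fun v : E => sqrtNormQuotient 0 w v * (2 * √‖v‖ ^ 3))
      (innerSL ℝ w) η :=
    (innerSL ℝ w).hasFDerivAt.congr_of_eventuallyEq ((eventually_ne_nhds hη).mono fun v hv =>
      (sqrtNormQuotient_zero_mul hv).trans (real_inner_comm w v))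
  have hgrad : w = (sqrtNormQuotient 0 w η * (3 / √‖η‖)) • η := by
    have h := hinner.unique hprod
    rw [smul_zero, add_zero, smul_smul, ← map_smul] at h
    exact innerSL_inj.1 h
  have hcube : sqrtNormQuotient 0 w η * (2 * √‖η‖ ^ 3) =
      sqrtNormQuotient 0 w η * (3 * √‖η‖ ^ 3) := by
    calc sqrtNormQuotient 0 w η * (2 * √‖η‖ ^ 3) = ⟪η, w⟫ := sqrtNormQuotient_zero_mul hη
      _ = sqrtNormQuotient 0 w η * (3 / √‖η‖) * ‖η‖ ^ 2 := by
          conv_lhs => rw [hgrad, real_inner_smul_right, real_inner_self_eq_norm_sq]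
      _ = sqrtNormQuotient 0 w η * (3 * √‖η‖ ^ 3) := by
          rw [← Real.sq_sqrt (norm_nonneg η), Real.sqrt_sq (Real.sqrt_nonneg _)]
          field_simp
  have hquot : sqrtNormQuotient 0 w η = 0 := by
    have hvanish : sqrtNormQuotient 0 w η * √‖η‖ ^ 3 = 0 := by linarith
    exact (mul_eq_zero.1 hvanish).resolve_right (by positivity)
  exact hw (by rw [hgrad, hquot, zero_mul, zero_smul])

lemma fderiv_sqrtNormQuotient_ne_zero (hw : w ≠ 0) (hη : η ≠ 0) (hζ : η + r • w ≠ 0) :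
    fderiv ℝ (sqrtNormQuotient r w) η ≠ 0 := by
  rcases eq_or_ne r 0 with rfl | hr
  · exact fderiv_sqrtNormQuotient_zero_ne_zero hw hη
  · exact fderiv_sqrtNormQuotient_ne_zero_of_ne_zero hr hw hη hζ

end Phase

section Autocorrelation

open scoped ComplexConjugate

lemma integral_integral_mul_conj_add {G 𝕜 : Type*} [RCLike 𝕜] [MeasurableSpace G] [AddGroup G]
    [MeasurableAdd₂ G] {m : Measure G} [SFinite m] [m.IsAddLeftInvariant] {F : G → 𝕜}
    (hF : Integrable F m) :
    ∫ h, ∫ η, F η * conj (F (η + h)) ∂m ∂m = ((‖∫ η, F η ∂m‖ ^ 2 : ℝ) : 𝕜) := by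
  have hconj : Integrable (fun η => conj (F η)) m :=
    RCLike.conjLIE.toContinuousLinearEquiv.toContinuousLinearMap.integrable_comp hF
  have hprod : Integrable (Function.uncurry fun h η => F η * conj (F (η + h))) (m.prod m) :=
    (measurePreserving_prod_add_swap m m).integrable_comp_of_integrable (hF.mul_prod hconj)
  rw [integral_integral_swap hprod]
  calc ∫ η, ∫ h, F η * conj (F (η + h)) ∂m ∂m = ∫ η, F η * conj (∫ h, F h ∂m) ∂m := by
        refine integral_congr_ae (.of_forall fun η => ?_)
        dsimp only
        rw [integral_const_mul, integral_conj, integral_add_left_eq_self]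
    _ = ((‖∫ η, F η ∂m‖ ^ 2 : ℝ) : 𝕜) := by
        rw [integral_mul_const, RCLike.mul_conj, RCLike.ofReal_pow]

lemma norm_integral_sq_le_of_norm_autocorrelation_le {E 𝕜 : Type*} [RCLike 𝕜]
    [NormedAddCommGroup E] [NormedSpace ℝ E] [FiniteDimensional ℝ E] [MeasurableSpace E]
    [BorelSpace E] {m : Measure E} [m.IsAddHaarMeasure] {F : E → 𝕜} (hF : Integrable F m)
    {C lam s : ℝ} (hlam : 0 < lam) (hs : (Module.finrank ℝ E : ℝ) < s)
    (hdecay : ∀ h, ‖∫ η, F η * conj (F (η + h)) ∂m‖ ≤ C * (1 + ‖lam • h‖) ^ (-s)) :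
    ‖∫ η, F η ∂m‖ ^ 2 ≤ C * (∫ u, (1 + ‖u‖) ^ (-s) ∂m) * (lam ^ Module.finrank ℝ E)⁻¹ := by
  have hint : Integrable (fun h : E => C * (1 + ‖lam • h‖) ^ (-s)) m :=
    ((integrable_one_add_norm hs).comp_smul hlam.ne').const_mul C
  calc ‖∫ η, F η ∂m‖ ^ 2 = ‖∫ h, ∫ η, F η * conj (F (η + h)) ∂m ∂m‖ := by
        rw [integral_integral_mul_conj_add hF, RCLike.norm_ofReal, abs_of_nonneg (by positivity)]
    _ ≤ ∫ h, C * (1 + ‖lam • h‖) ^ (-s) ∂m :=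
        norm_integral_le_of_norm_le hint (.of_forall hdecay)
    _ = C * (∫ u, (1 + ‖u‖) ^ (-s) ∂m) * (lam ^ Module.finrank ℝ E)⁻¹ := by
        rw [integral_const_mul, Measure.integral_comp_smul m fun u : E => (1 + ‖u‖) ^ (-s),
          abs_of_pos (by positivity), smul_eq_mul]
        ring

end Autocorrelation

section HalfWaveSymbol

variable {E : Type*} [NormedAddCommGroup E] {ψ : E → ℂ}

/-- The symbol `e^{-iλ√‖η‖} ψ(η)` of the half-wave propagator at time `λ`, localized by `ψ`. -/
def halfWaveSymbol (ψ : E → ℂ) (lam : ℝ) (η : E) : ℂ :=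
  Complex.exp (-Complex.I * (lam * √‖η‖ : ℝ)) * ψ η

lemma halfWaveSymbol_comp_inv_smul [NormedSpace ℝ E] {R : ℝ} (hR : 0 < R) (lam : ℝ) (ξ : E) :
    halfWaveSymbol (fun ξ => ψ (R⁻¹ • ξ)) lam ξ = halfWaveSymbol ψ (lam * √R) (R⁻¹ • ξ) := by
  have hsqrt : √R * √‖R⁻¹ • ξ‖ = √‖ξ‖ := by
    rw [← Real.sqrt_mul hR.le, norm_smul, norm_inv, Real.norm_of_nonneg hR.le,
      mul_inv_cancel_left₀ hR.ne']
  rw [halfWaveSymbol, halfWaveSymbol, mul_assoc lam, hsqrt]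

lemma integrable_halfWaveSymbol [MeasurableSpace E] [OpensMeasurableSpace E] (m : Measure E)
    [IsFiniteMeasureOnCompacts m] (hψ : Continuous ψ) (hψc : HasCompactSupport ψ) (lam : ℝ) :
    Integrable (halfWaveSymbol ψ lam) m :=
  Continuous.integrable_of_hasCompactSupport (.mul (by fun_prop) hψ) hψc.mul_left

end HalfWaveSymbol

section Kernel

open scoped ContDiff ComplexConjugate

variable {E : Type*} [NormedAddCommGroup E] [InnerProductSpace ℝ E]

/-- A bump function in the squared length of a vector: it restricts directions `w` to a compact
region avoiding `0`, on which `‖w‖ = 1` is allowed. -/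
def unitBump : ContDiffBump (1 : ℝ) where
  rIn := 1 / 4
  rOut := 1 / 2
  rIn_pos := by norm_num
  rIn_lt_rOut := by norm_num

/-- The amplitude `ψ(η) conj ψ(η + r w)` in the autocorrelation of a wave packet, cut off to
directions `w` of length about `1`, as a function of `((r, w), η)`. -/
def differencedAmplitude (ψ : E → ℂ) (z : (ℝ × E) × E) : ℂ :=
  (unitBump (‖z.1.2‖ ^ 2) : ℂ) * (ψ z.2 * conj (ψ (z.2 + z.1.1 • z.1.2)))

variable {ψ : E → ℂ}

lemma differencedAmplitude_of_norm_eq_one {w : E} (hw : ‖w‖ = 1) (r : ℝ) (η : E) :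
    differencedAmplitude ψ ((r, w), η) = ψ η * conj (ψ (η + r • w)) := by
  have hbump : unitBump (1 : ℝ) = 1 :=
    unitBump.one_of_mem_closedBall (Metric.mem_closedBall_self unitBump.rIn_pos.le)
  rw [differencedAmplitude, hw, one_pow, hbump, Complex.ofReal_one, one_mul]

lemma contDiff_differencedAmplitude (hψ : ContDiff ℝ ∞ ψ) :
    ContDiff ℝ ∞ (differencedAmplitude ψ) := by
  have hbump : ContDiff ℝ ∞ (fun z : (ℝ × E) × E => ((unitBump (‖z.1.2‖ ^ 2) : ℝ) : ℂ)) :=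
    Complex.ofRealCLM.contDiff.comp
      (unitBump.contDiff.comp ((contDiff_snd.comp contDiff_fst).norm_sq ℝ))
  have hshift : ContDiff ℝ ∞ (fun z : (ℝ × E) × E => conj (ψ (z.2 + z.1.1 • z.1.2))) :=
    Complex.conjCLE.contDiff.comp (hψ.comp (by fun_prop))
  exact hbump.mul ((hψ.comp contDiff_snd).mul hshift)

lemma tsupport_differencedAmplitude_subset :
    tsupport (differencedAmplitude ψ) ⊆ {z | ‖z.1.2‖ ^ 2 ∈ Metric.closedBall (1 : ℝ) (1 / 2) ∧
      z.2 ∈ tsupport ψ ∧ z.2 + z.1.1 • z.1.2 ∈ tsupport ψ} := by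
  refine closure_minimal (fun z hz => ?_) ?_
  · obtain ⟨hbump, hprod⟩ := mul_ne_zero_iff.1 (Function.mem_support.1 hz)
    obtain ⟨hη, hζ⟩ := mul_ne_zero_iff.1 hprod
    refine ⟨?_, subset_tsupport _ hη, subset_tsupport _ ((map_ne_zero _).1 hζ)⟩
    rw [show (1 / 2 : ℝ) = unitBump.rOut from rfl, ← unitBump.tsupport_eq]
    exact subset_tsupport _ (Complex.ofReal_ne_zero.1 hbump)
  · exact (Metric.isClosed_closedBall.preimage (by fun_prop)).inter
      (((isClosed_tsupport ψ).preimage (by fun_prop)).inter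
        ((isClosed_tsupport ψ).preimage (by fun_prop)))

lemma norm_sq_mem_Icc_of_mem_tsupport_differencedAmplitude {z : (ℝ × E) × E}
    (hz : z ∈ tsupport (differencedAmplitude ψ)) : ‖z.1.2‖ ^ 2 ∈ Set.Icc (1 / 2 : ℝ) (3 / 2) := by
  have h := (tsupport_differencedAmplitude_subset hz).1
  rw [Real.closedBall_eq_Icc] at h
  exact ⟨by linarith [h.1], by linarith [h.2]⟩

lemma hasCompactSupport_differencedAmplitude [FiniteDimensional ℝ E]
    (hψc : HasCompactSupport ψ) : HasCompactSupport (differencedAmplitude ψ) := by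
  obtain ⟨M, hM⟩ := hψc.isBounded.exists_norm_le
  refine ((isCompact_Icc.prod (isCompact_closedBall (0 : E) 2)).prod
    hψc).of_isClosed_subset (isClosed_tsupport _)
    (?_ : _ ⊆ (Set.Icc (-(4 * M)) (4 * M) ×ˢ Metric.closedBall (0 : E) 2) ×ˢ tsupport ψ)
  rintro ⟨⟨r, w⟩, η⟩ hz
  obtain ⟨hlow, hhigh⟩ := norm_sq_mem_Icc_of_mem_tsupport_differencedAmplitude hz
  obtain ⟨-, hη, hζ⟩ := tsupport_differencedAmplitude_subset hz
  dsimp only at hlow hhigh hη hζ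
  have hw : 1 / 2 ≤ ‖w‖ := by nlinarith [norm_nonneg w]
  have hrw : |r| * ‖w‖ ≤ 2 * M := by
    calc |r| * ‖w‖ = ‖(η + r • w) - η‖ := by
          rw [add_sub_cancel_left, norm_smul, Real.norm_eq_abs]
      _ ≤ ‖η + r • w‖ + ‖η‖ := norm_sub_le _ _
      _ ≤ 2 * M := by linarith [hM _ hη, hM _ hζ]
  have hr : |r| ≤ 4 * M := by nlinarith [abs_nonneg r]
  exact ⟨⟨abs_le.1 hr, mem_closedBall_zero_iff.2 (by nlinarith [norm_nonneg w])⟩, hη⟩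

lemma ne_zero_of_mem_tsupport_differencedAmplitude (h0 : 0 ∉ tsupport ψ) {z : (ℝ × E) × E}
    (hz : z ∈ tsupport (differencedAmplitude ψ)) :
    z.1.2 ≠ 0 ∧ z.2 ≠ 0 ∧ z.2 + z.1.1 • z.1.2 ≠ 0 := by
  obtain ⟨-, hη, hζ⟩ := tsupport_differencedAmplitude_subset hz
  refine ⟨fun hw => ?_, ne_of_mem_of_not_mem hη h0, ne_of_mem_of_not_mem hζ h0⟩
  have hlow := (norm_sq_mem_Icc_of_mem_tsupport_differencedAmplitude hz).1
  rw [hw, norm_zero] at hlow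
  norm_num at hlow

lemma integrable_cexp_inner_mul [MeasurableSpace E] [OpensMeasurableSpace E] {m : Measure E}
    {A : E → ℂ} (hA : Integrable A m) (y : E) :
    Integrable (fun η => Complex.exp (Complex.I * (⟪y, η⟫ : ℝ)) * A η) m := by
  have hphase : Continuous fun η : E => Complex.exp (Complex.I * (⟪y, η⟫ : ℝ)) := by fun_prop
  exact hA.bdd_mul hphase.aestronglyMeasurable (c := 1)
    (.of_forall fun η => (Complex.norm_exp_I_mul_ofReal _).le)

lemma cexp_inner_mul_halfWaveSymbol_mul_conj (lam : ℝ) (y h η : E) :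
    Complex.exp (Complex.I * (⟪y, η⟫ : ℝ)) * halfWaveSymbol ψ lam η *
        conj (Complex.exp (Complex.I * (⟪y, η + h⟫ : ℝ)) * halfWaveSymbol ψ lam (η + h)) =
      Complex.exp (Complex.I * ((-⟪y, h⟫ : ℝ) : ℂ)) *
        (Complex.exp (Complex.I * ((lam * (√‖η + h‖ - √‖η‖) : ℝ) : ℂ)) *
          (ψ η * conj (ψ (η + h)))) := by
  have hphase : Complex.exp (Complex.I * (⟪y, η⟫ : ℝ)) *
      Complex.exp (-Complex.I * (lam * √‖η‖ : ℝ)) *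
      (Complex.exp (-Complex.I * (⟪y, η + h⟫ : ℝ)) *
        Complex.exp (Complex.I * (lam * √‖η + h‖ : ℝ))) =
      Complex.exp (Complex.I * ((-⟪y, h⟫ : ℝ) : ℂ)) *
        Complex.exp (Complex.I * ((lam * (√‖η + h‖ - √‖η‖) : ℝ) : ℂ)) := by
    simp only [← Complex.exp_add, inner_add_right]
    congr 1
    push_cast
    ring
  simp only [halfWaveSymbol, map_mul, ← Complex.exp_conj, map_neg, Complex.conj_I,
    Complex.conj_ofReal, neg_neg]
  linear_combination ψ η * conj (ψ (η + h)) * hphase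

variable [FiniteDimensional ℝ E] [MeasurableSpace E] [BorelSpace E] (m : Measure E)
  [m.IsAddHaarMeasure]

lemma exists_one_add_pow_mul_norm_autocorrelation_smul_le (hψ : ContDiff ℝ ∞ ψ)
    (hψc : HasCompactSupport ψ) (h0 : 0 ∉ tsupport ψ) (N : ℕ) :
    ∃ C, ∀ (lam r : ℝ) (w : E), ‖w‖ = 1 → (1 + |lam * r|) ^ N *
      ‖∫ η, Complex.exp (Complex.I * ((lam * (√‖η + r • w‖ - √‖η‖) : ℝ) : ℂ)) *
        (ψ η * conj (ψ (η + r • w))) ∂m‖ ≤ C := by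
  obtain ⟨C, hC⟩ := exists_one_add_pow_mul_norm_oscillatoryIntegral_le m
    (G := fun z : (ℝ × E) × E => sqrtNormQuotient z.1.1 z.1.2 z.2)
    (contDiff_differencedAmplitude hψ) (hasCompactSupport_differencedAmplitude hψc)
    (fun z hz => by
      obtain ⟨-, hη, hζ⟩ := ne_zero_of_mem_tsupport_differencedAmplitude h0 hz
      exact contDiffAt_sqrtNormQuotient hη hζ)
    (fun z hz => by
      obtain ⟨hw, hη, hζ⟩ := ne_zero_of_mem_tsupport_differencedAmplitude h0 hz
      exact fderiv_sqrtNormQuotient_ne_zero hw hη hζ) N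
  refine ⟨C, fun lam r w hw => le_of_eq_of_le ?_ (hC (r, w) (lam * r))⟩
  congr 2
  refine integral_congr_ae (.of_forall fun η => ?_)
  dsimp only
  rw [differencedAmplitude_of_norm_eq_one hw]
  rcases eq_or_ne η 0 with rfl | hη
  · rw [image_eq_zero_of_notMem_tsupport h0, zero_mul, mul_zero, mul_zero]
  · rw [mul_assoc lam, mul_sqrtNormQuotient hη]

lemma exists_one_add_pow_mul_norm_autocorrelation_le (hψ : ContDiff ℝ ∞ ψ)
    (hψc : HasCompactSupport ψ) (h0 : 0 ∉ tsupport ψ) (N : ℕ) :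
    ∃ C, ∀ (lam : ℝ) (h : E), (1 + ‖lam • h‖) ^ N *
      ‖∫ η, Complex.exp (Complex.I * ((lam * (√‖η + h‖ - √‖η‖) : ℝ) : ℂ)) *
        (ψ η * conj (ψ (η + h))) ∂m‖ ≤ C := by
  obtain ⟨C, hC⟩ := exists_one_add_pow_mul_norm_autocorrelation_smul_le m hψ hψc h0 N
  refine ⟨max C ‖∫ η, ψ η * conj (ψ η) ∂m‖, fun lam h => ?_⟩
  rcases eq_or_ne h 0 with rfl | hh
  · simp
  · have hnorm : ‖h‖ ≠ 0 := norm_ne_zero_iff.2 hh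
    refine le_max_of_le_left ?_
    have hunit := hC lam ‖h‖ (‖h‖⁻¹ • h) (by rw [norm_smul, norm_inv, norm_norm,
      inv_mul_cancel₀ hnorm])
    rwa [smul_inv_smul₀ hnorm, abs_mul, abs_norm, ← Real.norm_eq_abs lam, ← norm_smul] at hunit

theorem exists_norm_integral_halfWaveSymbol_le (hψ : ContDiff ℝ ∞ ψ)
    (hψc : HasCompactSupport ψ) (h0 : 0 ∉ tsupport ψ) :
    ∃ C, ∀ lam > 0, ∀ y : E,
      ‖∫ η, Complex.exp (Complex.I * (⟪y, η⟫ : ℝ)) * halfWaveSymbol ψ lam η ∂m‖ ≤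
        C * lam ^ (-(Module.finrank ℝ E / 2 : ℝ)) := by
  set n := Module.finrank ℝ E
  obtain ⟨C, hC⟩ := exists_one_add_pow_mul_norm_autocorrelation_le m hψ hψc h0 (n + 1)
  set s : ℝ := ((n + 1 : ℕ) : ℝ)
  refine ⟨√(C * ∫ u, (1 + ‖u‖) ^ (-s) ∂m), fun lam hlam y => ?_⟩
  have hsq := norm_integral_sq_le_of_norm_autocorrelation_le
    (integrable_cexp_inner_mul (integrable_halfWaveSymbol m hψ.continuous hψc lam) y) hlam
    (s := s) (C := C) (Nat.cast_lt.2 n.lt_succ_self) fun h => by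
      rw [Real.rpow_neg (by positivity), Real.rpow_natCast, ← div_eq_mul_inv,
        le_div_iff₀' (by positivity)]
      simpa only [cexp_inner_mul_halfWaveSymbol_mul_conj, integral_const_mul, norm_mul,
        Complex.norm_exp_I_mul_ofReal, one_mul] using hC lam h
  have hroot : √(lam ^ n)⁻¹ = lam ^ (-(n / 2 : ℝ)) := by
    rw [Real.sqrt_eq_rpow, ← Real.rpow_natCast, ← Real.rpow_neg hlam.le, ← Real.rpow_mul hlam.le]
    ring_nf
  rw [← hroot, ← Real.sqrt_mul' _ (by positivity)]
  exact Real.le_sqrt_of_sq_le hsq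

lemma integral_cexp_inner_mul_halfWaveSymbol_comp_inv_smul {R : ℝ} (hR : 0 < R) (lam : ℝ) (y : E) :
    ∫ ξ, Complex.exp (Complex.I * (⟪y, ξ⟫ : ℝ)) *
        halfWaveSymbol (fun ξ => ψ (R⁻¹ • ξ)) lam ξ ∂m =
      R ^ Module.finrank ℝ E • ∫ η, Complex.exp (Complex.I * (⟪R • y, η⟫ : ℝ)) *
        halfWaveSymbol ψ (lam * √R) η ∂m := by
  rw [← Measure.integral_comp_inv_smul_of_nonneg m _ hR.le]
  refine integral_congr_ae (.of_forall fun ξ => ?_)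
  dsimp only
  rw [halfWaveSymbol_comp_inv_smul hR, real_inner_smul_left, real_inner_smul_right,
    mul_inv_cancel_left₀ hR.ne']

lemma exists_norm_integral_halfWaveSymbol_comp_inv_smul_le (hψ : ContDiff ℝ ∞ ψ)
    (hψc : HasCompactSupport ψ) (h0 : 0 ∉ tsupport ψ) :
    ∃ C > 0, ∀ R > 0, ∀ lam > 0, ∀ y : E,
      ‖∫ ξ, Complex.exp (Complex.I * (⟪y, ξ⟫ : ℝ)) *
        halfWaveSymbol (fun ξ => ψ (R⁻¹ • ξ)) lam ξ ∂m‖ ≤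
        C * lam ^ (-(Module.finrank ℝ E / 2 : ℝ)) * R ^ (3 * Module.finrank ℝ E / 4 : ℝ) := by
  obtain ⟨C, hC⟩ := exists_norm_integral_halfWaveSymbol_le m hψ hψc h0
  refine ⟨max C 1, by positivity, fun R hR lam hlam y => ?_⟩
  set n := Module.finrank ℝ E
  have hexp : R ^ n * (√R) ^ (-(n / 2 : ℝ)) = R ^ (3 * n / 4 : ℝ) := by
    rw [Real.sqrt_eq_rpow, ← Real.rpow_mul hR.le, ← Real.rpow_natCast, ← Real.rpow_add hR]
    ring_nf
  rw [integral_cexp_inner_mul_halfWaveSymbol_comp_inv_smul m hR, norm_smul,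
    Real.norm_of_nonneg (by positivity)]
  calc R ^ n * ‖∫ η, Complex.exp (Complex.I * (⟪R • y, η⟫ : ℝ)) *
        halfWaveSymbol ψ (lam * √R) η ∂m‖
      ≤ R ^ n * (C * (lam * √R) ^ (-(n / 2 : ℝ))) := by
        gcongr
        exact hC _ (by positivity) _
    _ ≤ R ^ n * (max C 1 * (lam * √R) ^ (-(n / 2 : ℝ))) := by
        gcongr
        exact le_max_left C 1
    _ = max C 1 * lam ^ (-(n / 2 : ℝ)) * R ^ (3 * n / 4 : ℝ) := by
        rw [← hexp, Real.mul_rpow hlam.le (Real.sqrt_nonneg R)]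
        ring

end Kernel

section Dispersive

variable {n : ℕ}

lemma integral_cexp_inner_mul_fhat {A f : EuclideanSpace ℝ (Fin n) → ℂ} (hA : Integrable A)
    (hf : Integrable f) (x : EuclideanSpace ℝ (Fin n)) :
    ∫ ξ, Complex.exp (Complex.I * (⟪x, ξ⟫ : ℝ)) * A ξ * fhat f ξ =
      ∫ y, f y * ∫ ξ, Complex.exp (Complex.I * (⟪x - y, ξ⟫ : ℝ)) * A ξ := by
  have hint : Integrable (Function.uncurry fun ξ y : EuclideanSpace ℝ (Fin n) =>
      f y * (Complex.exp (Complex.I * (⟪x - y, ξ⟫ : ℝ)) * A ξ)) (volume.prod volume) := by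
    have hphase : Continuous fun z : EuclideanSpace ℝ (Fin n) × EuclideanSpace ℝ (Fin n) =>
        Complex.exp (Complex.I * (⟪x - z.2, z.1⟫ : ℝ)) := by fun_prop
    refine ((hA.mul_prod hf).bdd_mul hphase.aestronglyMeasurable (c := 1)
      (.of_forall fun z => (Complex.norm_exp_I_mul_ofReal _).le)).congr (.of_forall fun z => ?_)
    dsimp only [Function.uncurry]
    ring
  simp_rw [← integral_const_mul]
  rw [← integral_integral_swap hint]
  refine integral_congr_ae (.of_forall fun ξ => ?_)
  dsimp only
  rw [fhat, ← integral_const_mul]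
  refine integral_congr_ae (.of_forall fun y => ?_)
  dsimp only
  rw [inner_sub_left, Complex.ofReal_sub, mul_sub, sub_eq_add_neg, ← neg_mul, Complex.exp_add]
  ring

lemma norm_integral_cexp_inner_mul_fhat_le {A f : EuclideanSpace ℝ (Fin n) → ℂ}
    (hA : Integrable A) (hf : Integrable f) {K : ℝ}
    (hK : ∀ y, ‖∫ ξ, Complex.exp (Complex.I * (⟪y, ξ⟫ : ℝ)) * A ξ‖ ≤ K)
    (x : EuclideanSpace ℝ (Fin n)) :
    ‖∫ ξ, Complex.exp (Complex.I * (⟪x, ξ⟫ : ℝ)) * A ξ * fhat f ξ‖ ≤ K * ∫ y, ‖f y‖ := by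
  rw [integral_cexp_inner_mul_fhat hA hf, ← integral_const_mul]
  refine norm_integral_le_of_norm_le (hf.norm.const_mul K) (.of_forall fun y => ?_)
  rw [norm_mul, mul_comm]
  gcongr
  exact hK _

lemma two_pow_two_mul_rpow (j : ℕ) (a : ℝ) :
    ((2 : ℝ) ^ (2 * j)) ^ (3 * a / 4) = 2 ^ (3 * (j : ℝ) * a / 2) := by
  rw [← Real.rpow_natCast, ← Real.rpow_mul zero_le_two, Nat.cast_mul, Nat.cast_ofNat]
  ring_nf

theorem stmt12_general {μ : ℝ} (hμ : 0 < μ) {ψ : EuclideanSpace ℝ (Fin n) → ℝ}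
    (hψ : ContDiff ℝ (⊤ : ℕ∞) ψ) (hψc : HasCompactSupport ψ) (h0 : 0 ∉ tsupport ψ) :
    ∃ C, 0 < C ∧ ∀ R > 0, ∀ f : EuclideanSpace ℝ (Fin n) → ℂ, Integrable f →
      ∀ t > 0, ∀ x : EuclideanSpace ℝ (Fin n),
        ‖(((2 * π) ^ (-(n : ℤ)) : ℝ) : ℂ) *
            ∫ ξ, Complex.exp (Complex.I * (⟪x, ξ⟫ : ℝ)) *
              Complex.exp (-Complex.I * (t * √μ * √‖ξ‖ : ℝ)) * (ψ (R⁻¹ • ξ) : ℂ) * fhat f ξ‖ ≤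
          C * t ^ (-(n / 2 : ℝ)) * R ^ (3 * n / 4 : ℝ) * ∫ y, ‖f y‖ := by
  obtain ⟨C, hC0, hC⟩ := exists_norm_integral_halfWaveSymbol_comp_inv_smul_le volume
    (Complex.ofRealCLM.contDiff.comp hψ) (hψc.comp_left Complex.ofReal_zero)
    fun h => h0 (tsupport_comp_subset Complex.ofReal_zero ψ h)
  refine ⟨(2 * π) ^ (-(n : ℤ)) * C * √μ ^ (-(n / 2 : ℝ)), by positivity,
    fun R hR f hf t ht x => ?_⟩
  have hsymbol : Integrable (halfWaveSymbol (fun ξ => (ψ (R⁻¹ • ξ) : ℂ)) (t * √μ)) :=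
    integrable_halfWaveSymbol volume (by fun_prop)
      ((hψc.comp_smul (inv_ne_zero hR.ne')).comp_left Complex.ofReal_zero) _
  have hmult := norm_integral_cexp_inner_mul_fhat_le hsymbol hf
    (hC R hR (t * √μ) (by positivity)) x
  simp only [halfWaveSymbol, ← mul_assoc, finrank_euclideanSpace_fin] at hmult
  rw [norm_mul, Complex.norm_real, Real.norm_of_nonneg (by positivity)]
  refine (mul_le_mul_of_nonneg_left hmult (by positivity)).trans_eq ?_
  rw [Real.mul_rpow ht.le (Real.sqrt_nonneg μ)]
  ring

end Dispersive

/-- frequency-localized dispersive estimate for the half-wave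
propagator `e^{−itμ^{1/2}|D|^{1/2}}`. -/
theorem stmt12 {d : ℕ} (hd : 2 ≤ d) (μ : ℝ) (hμ : 0 < μ)
    (c₀ c₁ : ℝ) (hc₀ : 0 < c₀) (hc₀₁ : c₀ ≤ c₁)
    (ψ : EuclideanSpace ℝ (Fin (d - 1)) → ℝ)
    (hψ : ContDiff ℝ (⊤ : ℕ∞) ψ) (hψc : HasCompactSupport ψ)
    (hsupp : tsupport ψ ⊆
      {η : EuclideanSpace ℝ (Fin (d - 1)) | c₀ ≤ ‖η‖ ∧ ‖η‖ ≤ c₁}) :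
    ∃ C : ℝ, 0 < C ∧
      ∀ j : ℕ, ∀ f₀ : SchwartzMap (EuclideanSpace ℝ (Fin (d - 1))) ℂ,
      ∀ t ∈ Set.Ioc (0 : ℝ) 1, ∀ x' : EuclideanSpace ℝ (Fin (d - 1)),
        ‖(((2 * π) ^ ((1 : ℤ) - (d : ℤ)) : ℝ) : ℂ) *
            ∫ ξ : EuclideanSpace ℝ (Fin (d - 1)),
              Complex.exp (Complex.I * (⟪x', ξ⟫ : ℝ)) *
                Complex.exp (-Complex.I * (t * Real.sqrt μ * Real.sqrt ‖ξ‖ : ℝ)) *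
                (ψ (((2 : ℝ) ^ (2 * j))⁻¹ • ξ) : ℂ) * fhat (fun x => f₀ x) ξ‖
          ≤ C * t ^ (-(((d : ℝ) - 1) / 2)) *
              (2 : ℝ) ^ (3 * (j : ℝ) * ((d : ℝ) - 1) / 2) *
              ∫ x : EuclideanSpace ℝ (Fin (d - 1)), ‖f₀ x‖ := by
  obtain ⟨C, hC0, hC⟩ := stmt12_general hμ hψ hψc fun h =>
    norm_pos_iff.1 (hc₀.trans_le (hsupp h).1) rfl
  refine ⟨C, hC0, fun j f₀ t ht x' => ?_⟩
  simpa only [Nat.cast_pred (zero_lt_two.trans_le hd), neg_sub, two_pow_two_mul_rpow] using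
    hC (2 ^ (2 * j)) (by positivity) f₀ f₀.integrable t ht.1 x'

end
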